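/- Let β ∈ [1,2) and (c,b) ∈ C(β). For every ε > 0 there exists K ∈ ℕ such that for all k ≥ K, the set F_k of k-feasible sequences in A^{≤k}(c,b) is nonempty and sup_{α ∈ A(c,b)} P(c,α) − ε ≤ max_{α ∈ F_k} P(c,α) ≤ sup_{α ∈ A(c,b)} P(c,α). (That is, lim_{k→∞} max over k-feasible α ∈ A^{≤k}(c,b) of P(c,α) equals max_{α ∈ A(c,b)} P(c,α).) -/

import Mathlib

/-- The binary entropy function, `h(p) = p log₂(1/p) + (1-p) log₂(1/(1-p))`,
with the convention `h(0) = h(1) = 0` (automatic since `1/0 = 0` and `logb 2 0 = 0`). -/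
noncomputable def binH (p : ℝ) : ℝ :=
  p * Real.logb 2 (1 / p) + (1 - p) * Real.logb 2 (1 / (1 - p))

/-- `(c, b) ∈ C(β)`: `c : ℕ → [0,1]`, `∑ cᵢ/2ⁱ = 1/(β·2ᵇ)` and `∑ cᵢ ≤ 1`
(the latter expressed via partial sums, which is equivalent for nonnegative terms). -/
def memC (β : ℝ) (c : ℕ → ℝ) (b : ℕ) : Prop :=
  (∀ i, c i ∈ Set.Icc (0 : ℝ) 1) ∧
  (∑' i : ℕ, c i / 2 ^ i) = 1 / (β * 2 ^ b) ∧
  ∀ n : ℕ, (∑ i ∈ Finset.range n, c i) ≤ 1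

/-- `α ∈ A(c,b)`: `α : ℕ → [0,1]` with `∑ αᵢ cᵢ / 2ⁱ = 1/(β·2^{b+1})`. -/
def memA (β : ℝ) (b : ℕ) (c α : ℕ → ℝ) : Prop :=
  (∀ i, α i ∈ Set.Icc (0 : ℝ) 1) ∧
  (∑' i : ℕ, α i * c i / 2 ^ i) = 1 / (β * 2 ^ (b + 1))

/-- `P(c,α) = ∑ h(αᵢ)·cᵢ − h(∑ αᵢ·cᵢ)`. -/
noncomputable def Pfun (c α : ℕ → ℝ) : ℝ :=
  (∑' i : ℕ, binH (α i) * c i) - binH (∑' i : ℕ, α i * c i)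

/-- `sup_{α ∈ A(c,b)} P(c,α)`. -/
noncomputable def supP (β : ℝ) (b : ℕ) (c : ℕ → ℝ) : ℝ :=
  sSup {y | ∃ α, memA β b c α ∧ y = Pfun c α}

/-- `G(β) = inf_{(c,b) ∈ C(β)} sup_{α ∈ A(c,b)} P(c,α)`. -/
noncomputable def Gfun (β : ℝ) : ℝ :=
  sInf {y | ∃ c b, memC β c b ∧ y = supP β b c}

/-- `(c,b)` is `k`-feasible: `cᵢ · β · 2ᵏ ∈ ℕ` for every `i`. -/
def kFeasC (β : ℝ) (k : ℕ) (c : ℕ → ℝ) : Prop :=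
  ∀ i, ∃ m : ℕ, c i * (β * 2 ^ k) = m

/-- `α` is `k`-feasible (for `c`): `αᵢ · cᵢ · β · 2ᵏ ∈ ℕ` for every `i`, and if there is
a largest index `t` with `c t > 0` then `α t < 1`. -/
def kFeasA (β : ℝ) (k : ℕ) (c α : ℕ → ℝ) : Prop :=
  (∀ i, ∃ m : ℕ, α i * c i * (β * 2 ^ k) = m) ∧
  (∀ t, 0 < c t → (∀ i, t < i → c i = 0) → α t < 1)

open Filter Topology

/-!
Let `α ∈ A(c,b)` and pass to the masses `xᵢ = αᵢ cᵢ`. Since `∑ αᵢ cᵢ / 2ⁱ` is only half of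
`∑ cᵢ / 2ⁱ`, some index `s` has `c s > 0` and `α s < 1`. Put `δ = 1 / (β 2ᵏ)`, round each `xᵢ` with
`i ≤ k` strictly down to a multiple of `δ` (of `2^(i-s) δ` when `i > s`), drop the masses beyond
`k`, and add the lost weighted mass to entry `s`. The coarser spacing beyond `s` makes that
correction a multiple of `δ`, and strictness of the rounding keeps every entry below `cᵢ`. As
`k → ∞` the correction tends to `0`, so the resulting sequences are `k`-feasible for large `k` and
converge pointwise to `α`; dominated convergence gives convergence of `P`.
-/

section Entropy

theorem binH_eq_binEntropy_div (p : ℝ) : binH p = Real.binEntropy p / Real.log 2 := by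
  simp only [binH, Real.binEntropy, Real.logb, one_div]
  ring

theorem continuous_binH : Continuous binH := by
  rw [funext binH_eq_binEntropy_div]
  exact Real.binEntropy_continuous.div_const _

theorem binH_mem_Icc {p : ℝ} (hp : p ∈ Set.Icc (0 : ℝ) 1) : binH p ∈ Set.Icc (0 : ℝ) 1 := by
  have hlog : 0 ≤ Real.log 2 := Real.log_nonneg one_le_two
  rw [binH_eq_binEntropy_div]
  exact ⟨div_nonneg (Real.binEntropy_nonneg hp.1 hp.2) hlog,
    div_le_one_of_le₀ Real.binEntropy_le_log_two hlog⟩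

end Entropy

section FloorBelow

/-- The largest natural multiple of `δ` strictly below `x`, for `δ, x > 0`. Natural subtraction
gives `0` when `x ≤ 0`. -/
noncomputable def floorBelow (δ x : ℝ) : ℝ :=
  (⌈x / δ⌉₊ - 1 : ℕ) * δ

variable {δ x : ℝ}

theorem floorBelow_zero (δ : ℝ) : floorBelow δ 0 = 0 := by
  simp [floorBelow]

theorem floorBelow_nonneg (hδ : 0 ≤ δ) (x : ℝ) : 0 ≤ floorBelow δ x :=
  mul_nonneg (Nat.cast_nonneg _) hδ

theorem floorBelow_lt (hδ : 0 < δ) (hx : 0 < x) : floorBelow δ x < x := by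
  have hpos : 0 < x / δ := div_pos hx hδ
  rw [floorBelow, ← lt_div_iff₀ hδ, Nat.cast_pred (Nat.ceil_pos.2 hpos), sub_lt_iff_lt_add]
  exact Nat.ceil_lt_add_one hpos.le

theorem floorBelow_le (hδ : 0 < δ) (hx : 0 ≤ x) : floorBelow δ x ≤ x := by
  rcases hx.eq_or_lt with rfl | hx
  · exact (floorBelow_zero δ).le
  · exact (floorBelow_lt hδ hx).le

theorem sub_le_floorBelow (hδ : 0 < δ) (x : ℝ) : x - δ ≤ floorBelow δ x := by
  have hpred : (⌈x / δ⌉₊ : ℝ) ≤ (⌈x / δ⌉₊ - 1 : ℕ) + 1 := mod_cast le_tsub_add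
  have hceil : x / δ ≤ (⌈x / δ⌉₊ - 1 : ℕ) + 1 := (Nat.le_ceil _).trans hpred
  rw [div_le_iff₀ hδ] at hceil
  rw [floorBelow]
  linarith

theorem tendsto_floorBelow (hx : 0 ≤ x) :
    Tendsto (fun δ => floorBelow δ x) (𝓝[>] 0) (𝓝 x) := by
  have hlower : Tendsto (fun δ : ℝ => x - δ) (𝓝[>] 0) (𝓝 x) := by
    have hid : Tendsto (fun δ : ℝ => δ) (𝓝[>] 0) (𝓝 0) := nhdsWithin_le_nhds
    simpa using hid.const_sub x
  refine tendsto_of_tendsto_of_tendsto_of_le_of_le' hlower tendsto_const_nhds ?_ ?_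
  · filter_upwards [self_mem_nhdsWithin] with δ hδ using sub_le_floorBelow hδ x
  · filter_upwards [self_mem_nhdsWithin] with δ hδ using floorBelow_le hδ hx

end FloorBelow

section DyadicSum

/-- The weighted total mass `∑ xᵢ / 2ⁱ` in which the constraint defining `A(c,b)` is expressed. -/
noncomputable def dyadicSum (x : ℕ → ℝ) : ℝ :=
  ∑' i, x i / 2 ^ i

/-- The sequence `x` with its `s`-th entry changed so that the dyadic sum becomes `M`. -/
noncomputable def rebalance (M : ℝ) (s : ℕ) (x : ℕ → ℝ) : ℕ → ℝ :=
  Function.update x s (x s + 2 ^ s * (M - dyadicSum x))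

variable {ι : Type*} {l : Filter ι} {M : ℝ} {s i : ℕ} {x c : ℕ → ℝ}

theorem rebalance_self : rebalance M s x s = x s + 2 ^ s * (M - dyadicSum x) :=
  Function.update_self ..

theorem rebalance_of_ne (h : i ≠ s) : rebalance M s x i = x i :=
  Function.update_of_ne h ..

theorem summable_div_two_pow (hx₀ : ∀ i, 0 ≤ x i) (hx : Summable x) :
    Summable fun i => x i / 2 ^ i :=
  hx.of_nonneg_of_le (fun i => div_nonneg (hx₀ i) (by positivity))
    fun i => div_le_self (hx₀ i) (one_le_pow₀ one_le_two)

theorem dyadicSum_rebalance (hx : Summable fun i => x i / 2 ^ i) :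
    dyadicSum (rebalance M s x) = M := by
  have hupdate := hx.hasSum.update s ((x s + 2 ^ s * (M - dyadicSum x)) / 2 ^ s)
  have hterm : (fun i => rebalance M s x i / 2 ^ i) =
      Function.update (fun i => x i / 2 ^ i) s ((x s + 2 ^ s * (M - dyadicSum x)) / 2 ^ s) := by
    funext i
    rcases eq_or_ne i s with rfl | hi
    · rw [rebalance_self, Function.update_self]
    · rw [rebalance_of_ne hi, Function.update_of_ne hi]
  rw [dyadicSum, hterm, hupdate.tsum_eq, ← dyadicSum]
  field_simp
  ring

theorem tendsto_dyadicSum {y : ι → ℕ → ℝ} (hc : Summable c) (hbound : ∀ n i, |y n i| ≤ c i)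
    (hy : ∀ i, Tendsto (fun n => y n i) l (𝓝 (x i))) :
    Tendsto (fun n => dyadicSum (y n)) l (𝓝 (dyadicSum x)) := by
  refine tendsto_tsum_of_dominated_convergence hc (fun i => (hy i).div_const _)
    (.of_forall fun n i => ?_)
  rw [norm_div, norm_pow, Real.norm_ofNat]
  exact (div_le_self (norm_nonneg _) (one_le_pow₀ one_le_two)).trans (hbound n i)

theorem tendsto_rebalance {y : ι → ℕ → ℝ} (hM : Tendsto (fun n => dyadicSum (y n)) l (𝓝 M))
    (hy : ∀ i, Tendsto (fun n => y n i) l (𝓝 (x i))) (i : ℕ) :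
    Tendsto (fun n => rebalance M s (y n) i) l (𝓝 (x i)) := by
  rcases eq_or_ne i s with rfl | hi
  · simp only [rebalance_self]
    simpa using (hy i).add ((hM.const_sub M).const_mul (2 ^ i))
  · simpa only [rebalance_of_ne hi] using hy i

end DyadicSum

section GridSpacing

variable {β : ℝ} {b k : ℕ}

theorem inv_mul_two_pow_pos (hβ : 0 < β) (k : ℕ) : 0 < (β * 2 ^ k)⁻¹ := by
  positivity

theorem tendsto_inv_mul_two_pow (hβ : 0 < β) :
    Tendsto (fun k : ℕ => (β * 2 ^ k)⁻¹) atTop (𝓝 0) :=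
  ((tendsto_pow_atTop_atTop_of_one_lt one_lt_two).const_mul_atTop hβ).inv_tendsto_atTop

theorem two_pow_mul_inv_mem_zmultiples (β : ℝ) (s : ℕ) (hbk : b ≤ k) :
    2 ^ s * (1 / (β * 2 ^ b)) ∈ AddSubgroup.zmultiples (β * 2 ^ k)⁻¹ := by
  obtain ⟨d, rfl⟩ := Nat.exists_eq_add_of_le hbk
  convert AddSubgroup.nsmul_mem_zmultiples (β * 2 ^ (b + d))⁻¹ (2 ^ (s + d)) using 1
  rw [nsmul_eq_mul, pow_add 2 b d]
  push_cast
  field_simp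
  ring

theorem exists_nat_eq_mul_of_mem_zmultiples {B y : ℝ} (hB : 0 < B) (hy₀ : 0 ≤ y)
    (hy : y ∈ AddSubgroup.zmultiples B⁻¹) : ∃ m : ℕ, y * B = m := by
  obtain ⟨z, rfl⟩ := AddSubgroup.mem_zmultiples_iff.1 hy
  have hz : (z • B⁻¹) * B = z := by rw [zsmul_eq_mul, inv_mul_cancel_right₀ hB.ne']
  have hz₀ : 0 ≤ z := by exact_mod_cast hz ▸ mul_nonneg hy₀ hB.le
  lift z to ℕ using hz₀
  exact ⟨z, hz⟩

end GridSpacing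

section GridApprox

/-- The entries of `x` up to index `k`, rounded strictly down; the others are set to `0`. The
spacing at index `i` is `δ` for `i ≤ s` (natural subtraction) and `2^(i-s) δ` for `i > s`, so that
the dyadic sum is a multiple of `δ / 2^s`. -/
noncomputable def roundDown (δ : ℝ) (s k : ℕ) (x : ℕ → ℝ) (i : ℕ) : ℝ :=
  if i ≤ k then floorBelow (2 ^ (i - s) * δ) (x i) else 0

/-- The sequence `x` rounded down to multiples of `δ` and truncated after index `k`, with the lost
weighted mass returned to entry `s`. -/
noncomputable def gridApprox (δ : ℝ) (s k : ℕ) (x : ℕ → ℝ) : ℕ → ℝ :=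
  rebalance (dyadicSum x) s (roundDown δ s k x)

variable {δ : ℝ} {s k i : ℕ} {x c : ℕ → ℝ}

theorem roundDown_of_lt (h : k < i) : roundDown δ s k x i = 0 :=
  if_neg h.not_ge

theorem roundDown_eq_zero (h : x i = 0) : roundDown δ s k x i = 0 := by
  rw [roundDown, h, floorBelow_zero, ite_self]

theorem roundDown_nonneg (hδ : 0 ≤ δ) (i : ℕ) : 0 ≤ roundDown δ s k x i := by
  unfold roundDown
  split_ifs
  · exact floorBelow_nonneg (by positivity) _
  · exact le_rfl

theorem roundDown_le (hδ : 0 < δ) (hx : 0 ≤ x i) : roundDown δ s k x i ≤ x i := by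
  unfold roundDown
  split_ifs
  · exact floorBelow_le (by positivity) hx
  · exact hx

theorem roundDown_lt (hδ : 0 < δ) (hx : 0 ≤ x i) (hxc : x i ≤ c i) (hc : 0 < c i) :
    roundDown δ s k x i < c i := by
  rcases hx.eq_or_lt with hx₀ | hpos
  · exact (roundDown_le hδ hx).trans_lt (hx₀ ▸ hc)
  · unfold roundDown
    split_ifs
    · exact (floorBelow_lt (by positivity) hpos).trans_le hxc
    · exact hc

theorem summable_roundDown_div_two_pow :
    Summable fun i => roundDown δ s k x i / 2 ^ i := by
  refine summable_of_ne_finset_zero (s := Finset.range (k + 1)) fun i hi => ?_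
  rw [roundDown_of_lt (by simpa using hi), zero_div]

theorem tendsto_roundDown {δ : ℕ → ℝ} (hδ : Tendsto δ atTop (𝓝[>] 0)) (hx : 0 ≤ x i) :
    Tendsto (fun k => roundDown (δ k) s k x i) atTop (𝓝 (x i)) := by
  have hspacing : Tendsto (fun k => 2 ^ (i - s) * δ k) atTop (𝓝[>] (0 : ℝ)) := by
    refine tendsto_nhdsWithin_iff.2 ⟨?_, ?_⟩
    · simpa using (tendsto_nhds_of_tendsto_nhdsWithin hδ).const_mul (2 ^ (i - s) : ℝ)
    · filter_upwards [(tendsto_nhdsWithin_iff.1 hδ).2] with k hk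
      exact Set.mem_Ioi.2 (mul_pos (by positivity) (Set.mem_Ioi.1 hk))
  refine ((tendsto_floorBelow hx).comp hspacing).congr' ?_
  filter_upwards [eventually_ge_atTop i] with k hk
  exact (if_pos hk).symm

theorem two_pow_mul_roundDown_div_mem_zmultiples (i : ℕ) :
    2 ^ s * (roundDown δ s k x i / 2 ^ i) ∈ AddSubgroup.zmultiples δ := by
  unfold roundDown floorBelow
  split_ifs
  · set n := ⌈x i / (2 ^ (i - s) * δ)⌉₊ - 1
    obtain ⟨d, hd⟩ : ∃ d, s + (i - s) = i + d := Nat.exists_eq_add_of_le le_add_tsub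
    have hpow : (2 : ℝ) ^ s * 2 ^ (i - s) = 2 ^ i * 2 ^ d := by rw [← pow_add, hd, pow_add]
    convert AddSubgroup.nsmul_mem_zmultiples δ (n * 2 ^ d) using 1
    rw [nsmul_eq_mul, ← mul_div_assoc, div_eq_iff (by positivity)]
    push_cast
    linear_combination n * δ * hpow
  · simp

theorem roundDown_mem_zmultiples (i : ℕ) :
    roundDown δ s k x i ∈ AddSubgroup.zmultiples δ := by
  unfold roundDown floorBelow
  split_ifs
  · convert AddSubgroup.nsmul_mem_zmultiples δ
      ((⌈x i / (2 ^ (i - s) * δ)⌉₊ - 1) * 2 ^ (i - s)) using 1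
    rw [nsmul_eq_mul]
    push_cast
    ring
  · exact zero_mem _

theorem two_pow_mul_dyadicSum_roundDown_mem_zmultiples :
    2 ^ s * dyadicSum (roundDown δ s k x) ∈ AddSubgroup.zmultiples δ := by
  rw [dyadicSum, tsum_eq_sum (s := Finset.range (k + 1)), Finset.mul_sum]
  · exact sum_mem fun i _ => two_pow_mul_roundDown_div_mem_zmultiples i
  · intro i hi
    rw [roundDown_of_lt (by simpa using hi), zero_div]

theorem dyadicSum_gridApprox : dyadicSum (gridApprox δ s k x) = dyadicSum x :=
  dyadicSum_rebalance summable_roundDown_div_two_pow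

theorem gridApprox_of_ne (h : i ≠ s) : gridApprox δ s k x i = roundDown δ s k x i :=
  rebalance_of_ne h

theorem gridApprox_of_lt (hsk : s ≤ k) (h : k < i) : gridApprox δ s k x i = 0 := by
  rw [gridApprox_of_ne (hsk.trans_lt h).ne', roundDown_of_lt h]

theorem gridApprox_nonneg (hδ : 0 < δ) (hx₀ : ∀ i, 0 ≤ x i) (hx : Summable x) (i : ℕ) :
    0 ≤ gridApprox δ s k x i := by
  have hround := roundDown_nonneg (s := s) (k := k) (x := x) hδ.le i
  rcases eq_or_ne i s with rfl | hi
  · have hsum : dyadicSum (roundDown δ i k x) ≤ dyadicSum x :=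
      summable_roundDown_div_two_pow.tsum_le_tsum
        (fun j => div_le_div_of_nonneg_right (roundDown_le hδ (hx₀ j)) (by positivity))
        (summable_div_two_pow hx₀ hx)
    rw [gridApprox, rebalance_self]
    exact add_nonneg hround (mul_nonneg (by positivity) (sub_nonneg.2 hsum))
  · rwa [gridApprox_of_ne hi]

theorem gridApprox_mem_zmultiples (h : 2 ^ s * dyadicSum x ∈ AddSubgroup.zmultiples δ) (i : ℕ) :
    gridApprox δ s k x i ∈ AddSubgroup.zmultiples δ := by
  rcases eq_or_ne i s with rfl | hi
  · rw [gridApprox, rebalance_self, mul_sub]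
    exact add_mem (roundDown_mem_zmultiples i)
      (sub_mem h two_pow_mul_dyadicSum_roundDown_mem_zmultiples)
  · exact gridApprox_of_ne hi ▸ roundDown_mem_zmultiples i

theorem tendsto_gridApprox {δ : ℕ → ℝ} (hδ₀ : ∀ k, 0 < δ k) (hδ : Tendsto δ atTop (𝓝 0))
    (hx₀ : ∀ i, 0 ≤ x i) (hx : Summable x) (i : ℕ) :
    Tendsto (fun k => gridApprox (δ k) s k x i) atTop (𝓝 (x i)) := by
  have hround : ∀ i, Tendsto (fun k => roundDown (δ k) s k x i) atTop (𝓝 (x i)) := fun i =>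
    tendsto_roundDown (tendsto_nhdsWithin_iff.2 ⟨hδ, .of_forall hδ₀⟩) (hx₀ i)
  refine tendsto_rebalance (tendsto_dyadicSum hx (fun k i => ?_) hround) hround i
  rw [abs_of_nonneg (roundDown_nonneg (hδ₀ k).le i)]
  exact roundDown_le (hδ₀ k) (hx₀ i)

theorem eventually_gridApprox_lt {δ : ℕ → ℝ} (hδ₀ : ∀ k, 0 < δ k) (hδ : Tendsto δ atTop (𝓝 0))
    (hx₀ : ∀ i, 0 ≤ x i) (hx : Summable x) (hxc : ∀ i, x i ≤ c i) (hs : x s < c s) :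
    ∀ᶠ k in atTop, ∀ i, 0 < c i → gridApprox (δ k) s k x i < c i := by
  have hlim := tendsto_gridApprox (s := s) hδ₀ hδ hx₀ hx s
  filter_upwards [hlim.eventually_lt_const hs] with k hk i hci
  rcases eq_or_ne i s with rfl | hi
  · exact hk
  · exact gridApprox_of_ne hi ▸ roundDown_lt (hδ₀ k) (hx₀ i) (hxc i) hci

end GridApprox

section Objective

variable {c α : ℕ → ℝ}

theorem summable_mul_of_mem_Icc (hc₀ : ∀ i, 0 ≤ c i) (hc : Summable c)
    (hα : ∀ i, α i ∈ Set.Icc (0 : ℝ) 1) : Summable fun i => α i * c i :=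
  hc.of_nonneg_of_le (fun i => mul_nonneg (hα i).1 (hc₀ i))
    fun i => mul_le_of_le_one_left (hc₀ i) (hα i).2

theorem tsum_mul_le_tsum_of_mem_Icc (hc₀ : ∀ i, 0 ≤ c i) (hc : Summable c)
    (hα : ∀ i, α i ∈ Set.Icc (0 : ℝ) 1) : ∑' i, α i * c i ≤ ∑' i, c i :=
  (summable_mul_of_mem_Icc hc₀ hc hα).tsum_le_tsum
    (fun i => mul_le_of_le_one_left (hc₀ i) (hα i).2) hc

theorem Pfun_le_tsum (hc₀ : ∀ i, 0 ≤ c i) (hc : Summable c) (hc₁ : ∑' i, c i ≤ 1)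
    (hα : ∀ i, α i ∈ Set.Icc (0 : ℝ) 1) : Pfun c α ≤ ∑' i, c i := by
  have htotal : ∑' i, α i * c i ∈ Set.Icc (0 : ℝ) 1 :=
    ⟨tsum_nonneg fun i => mul_nonneg (hα i).1 (hc₀ i),
      (tsum_mul_le_tsum_of_mem_Icc hc₀ hc hα).trans hc₁⟩
  calc Pfun c α ≤ ∑' i, binH (α i) * c i := sub_le_self _ (binH_mem_Icc htotal).1
    _ ≤ ∑' i, c i := tsum_mul_le_tsum_of_mem_Icc hc₀ hc fun i => binH_mem_Icc (hα i)

theorem tendsto_tsum_comp_mul {ι : Type*} {l : Filter ι} {g : ℝ → ℝ} {a : ι → ℕ → ℝ} {K : Set ℝ}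
    {B : ℝ} (hg : Continuous g) (hgB : ∀ x ∈ K, |g x| ≤ B) (hc : Summable c)
    (ha : ∀ᶠ n in l, ∀ i, a n i ∈ K)
    (hlim : ∀ i, c i ≠ 0 → Tendsto (fun n => a n i) l (𝓝 (α i))) :
    Tendsto (fun n => ∑' i, g (a n i) * c i) l (𝓝 (∑' i, g (α i) * c i)) := by
  refine tendsto_tsum_of_dominated_convergence (hc.abs.mul_left B) (fun i => ?_) ?_
  · by_cases hci : c i = 0
    · simp only [hci, mul_zero, tendsto_const_nhds]
    · exact ((hg.tendsto _).comp (hlim i hci)).mul_const _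
  · filter_upwards [ha] with n hn i
    rw [Real.norm_eq_abs, abs_mul]
    exact mul_le_mul_of_nonneg_right (hgB _ (hn i)) (abs_nonneg _)

theorem tendsto_Pfun {ι : Type*} {l : Filter ι} {a : ι → ℕ → ℝ} (hc : Summable c)
    (ha : ∀ᶠ n in l, ∀ i, a n i ∈ Set.Icc (0 : ℝ) 1)
    (hlim : ∀ i, c i ≠ 0 → Tendsto (fun n => a n i) l (𝓝 (α i))) :
    Tendsto (fun n => Pfun c (a n)) l (𝓝 (Pfun c α)) := by
  have habs : ∀ y ∈ Set.Icc (0 : ℝ) 1, |y| ≤ 1 := fun y hy => (abs_of_nonneg hy.1).trans_le hy.2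
  have hentropy := tendsto_tsum_comp_mul continuous_binH
    (fun x hx => habs _ (binH_mem_Icc hx)) hc ha hlim
  have htotal := tendsto_tsum_comp_mul continuous_id habs hc ha hlim
  exact hentropy.sub ((continuous_binH.tendsto _).comp htotal)

end Objective

section Feasible

variable {β : ℝ} {b k s i : ℕ} {c α : ℕ → ℝ}

theorem memC.nonneg (hC : memC β c b) (i : ℕ) : 0 ≤ c i :=
  (hC.1 i).1

theorem memC.summable (hC : memC β c b) : Summable c :=
  summable_of_sum_range_le hC.nonneg hC.2.2

theorem memC.bddAbove_Pfun (hC : memC β c b) :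
    BddAbove {y | ∃ α, memA β b c α ∧ y = Pfun c α} := by
  refine ⟨∑' i, c i, ?_⟩
  rintro _ ⟨α, hα, rfl⟩
  exact Pfun_le_tsum hC.nonneg hC.summable (Real.tsum_le_of_sum_range_le hC.nonneg hC.2.2) hα.1

theorem memC.memA_half (hC : memC β c b) : memA β b c fun _ => 1 / 2 := by
  refine ⟨fun _ => by norm_num, ?_⟩
  simp_rw [mul_div_assoc]
  rw [tsum_mul_left, hC.2.1, pow_succ]
  field_simp

theorem memA.exists_lt_one (hβ : 0 < β) (hC : memC β c b) (hα : memA β b c α) :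
    ∃ s, 0 < c s ∧ α s < 1 := by
  by_contra! hone
  have hmass : ∀ i, α i * c i = c i := by
    intro i
    rcases (hC.nonneg i).eq_or_lt with hci | hci
    · rw [← hci, mul_zero]
    · rw [le_antisymm (hα.1 i).2 (hone i hci), one_mul]
  have hhalf : 1 / (β * 2 ^ b) = 1 / (β * 2 ^ (b + 1)) := by
    rw [← hC.2.1, ← hα.2]
    simp_rw [hmass]
  have hpos : 0 < β * 2 ^ b := by positivity
  rw [one_div, one_div, inv_inj, pow_succ] at hhalf
  linarith

/-- The `k`-feasible approximation of `α`, obtained from `gridApprox` of the masses `αᵢ cᵢ` at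
grid spacing `1 / (β 2ᵏ)`. Division by zero makes its entries vanish outside the support of `c`. -/
noncomputable def feasibleApprox (β : ℝ) (c α : ℕ → ℝ) (s k i : ℕ) : ℝ :=
  gridApprox (β * 2 ^ k)⁻¹ s k (fun j => α j * c j) i / c i

theorem feasibleApprox_mul (hs : c s ≠ 0) (i : ℕ) :
    feasibleApprox β c α s k i * c i = gridApprox (β * 2 ^ k)⁻¹ s k (fun j => α j * c j) i := by
  rcases eq_or_ne (c i) 0 with hi | hi
  · have his : i ≠ s := fun h => hs (h ▸ hi)
    rw [gridApprox_of_ne his, roundDown_eq_zero (by rw [hi, mul_zero]), hi, mul_zero]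
  · exact div_mul_cancel₀ _ hi

theorem feasibleApprox_of_lt (hsk : s ≤ k) (h : k < i) : feasibleApprox β c α s k i = 0 := by
  rw [feasibleApprox, gridApprox_of_lt hsk h, zero_div]

theorem feasibleApprox_nonneg (hβ : 0 < β) (hc₀ : ∀ i, 0 ≤ c i) (hc : Summable c)
    (hα : ∀ i, α i ∈ Set.Icc (0 : ℝ) 1) (i : ℕ) : 0 ≤ feasibleApprox β c α s k i :=
  div_nonneg (gridApprox_nonneg (inv_mul_two_pow_pos hβ k)
    (fun i => mul_nonneg (hα i).1 (hc₀ i)) (summable_mul_of_mem_Icc hc₀ hc hα) i) (hc₀ i)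

theorem tendsto_feasibleApprox (hβ : 0 < β) (hc₀ : ∀ i, 0 ≤ c i) (hc : Summable c)
    (hα : ∀ i, α i ∈ Set.Icc (0 : ℝ) 1) (hi : c i ≠ 0) :
    Tendsto (fun k => feasibleApprox β c α s k i) atTop (𝓝 (α i)) := by
  have hgrid := tendsto_gridApprox (s := s) (inv_mul_two_pow_pos hβ) (tendsto_inv_mul_two_pow hβ)
    (fun i => mul_nonneg (hα i).1 (hc₀ i)) (summable_mul_of_mem_Icc hc₀ hc hα) i
  rw [← mul_div_cancel_right₀ (α i) hi]
  exact hgrid.div_const (c i)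

theorem eventually_feasibleApprox_lt_one (hβ : 0 < β) (hc₀ : ∀ i, 0 ≤ c i) (hc : Summable c)
    (hα : ∀ i, α i ∈ Set.Icc (0 : ℝ) 1) (hs : 0 < c s) (hαs : α s < 1) :
    ∀ᶠ k in atTop, ∀ i, feasibleApprox β c α s k i < 1 := by
  filter_upwards [eventually_gridApprox_lt (inv_mul_two_pow_pos hβ) (tendsto_inv_mul_two_pow hβ)
    (fun i => mul_nonneg (hα i).1 (hc₀ i)) (summable_mul_of_mem_Icc hc₀ hc hα)
    (fun i => mul_le_of_le_one_left (hc₀ i) (hα i).2) (mul_lt_of_lt_one_left hs hαs)] with k hk i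
  rcases (hc₀ i).eq_or_lt with hi | hi
  · rw [feasibleApprox, ← hi, div_zero]
    exact one_pos
  · exact (div_lt_one hi).2 (hk i hi)

theorem memA.memA_feasibleApprox (hα : memA β b c α) (hs : c s ≠ 0)
    (hmem : ∀ i, feasibleApprox β c α s k i ∈ Set.Icc (0 : ℝ) 1) :
    memA β b c (feasibleApprox β c α s k) := by
  refine ⟨hmem, ?_⟩
  simp_rw [feasibleApprox_mul hs]
  exact dyadicSum_gridApprox.trans hα.2

theorem memA.kFeasA_feasibleApprox (hβ : 0 < β) (hc₀ : ∀ i, 0 ≤ c i) (hα : memA β b c α)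
    (hs : c s ≠ 0) (hbk : b + 1 ≤ k)
    (hmem : ∀ i, feasibleApprox β c α s k i ∈ Set.Ico (0 : ℝ) 1) :
    kFeasA β k c (feasibleApprox β c α s k) := by
  refine ⟨fun i => ?_, fun t _ _ => (hmem t).2⟩
  have hM : 2 ^ s * dyadicSum (fun j => α j * c j) ∈ AddSubgroup.zmultiples (β * 2 ^ k)⁻¹ := by
    rw [dyadicSum, hα.2]
    exact two_pow_mul_inv_mem_zmultiples β s hbk
  refine exists_nat_eq_mul_of_mem_zmultiples (by positivity)
    (mul_nonneg (hmem i).1 (hc₀ i)) ?_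
  rw [feasibleApprox_mul hs]
  exact gridApprox_mem_zmultiples hM i

theorem memA.exists_feasible_tendsto_Pfun (hβ : 0 < β) (hC : memC β c b) (hα : memA β b c α) :
    ∃ a : ℕ → ℕ → ℝ,
      (∀ᶠ k in atTop, memA β b c (a k) ∧ (∀ i, k < i → a k i = 0) ∧ kFeasA β k c (a k)) ∧
      Tendsto (fun k => Pfun c (a k)) atTop (𝓝 (Pfun c α)) := by
  obtain ⟨s, hs, hαs⟩ := hα.exists_lt_one hβ hC
  have hmem : ∀ᶠ k in atTop, ∀ i, feasibleApprox β c α s k i ∈ Set.Ico (0 : ℝ) 1 :=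
    (eventually_feasibleApprox_lt_one hβ hC.nonneg hC.summable hα.1 hs hαs).mono fun k hk i =>
      ⟨feasibleApprox_nonneg hβ hC.nonneg hC.summable hα.1 i, hk i⟩
  refine ⟨feasibleApprox β c α s, ?_, tendsto_Pfun hC.summable
    (hmem.mono fun k hk i => Set.Ico_subset_Icc_self (hk i))
    fun i hi => tendsto_feasibleApprox hβ hC.nonneg hC.summable hα.1 hi⟩
  filter_upwards [hmem, eventually_ge_atTop s, eventually_ge_atTop (b + 1)] with k hk hsk hbk
  exact ⟨hα.memA_feasibleApprox hs.ne' fun i => Set.Ico_subset_Icc_self (hk i),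
    fun i hi => feasibleApprox_of_lt hsk hi, hα.kFeasA_feasibleApprox hβ hC.nonneg hs.ne' hbk hk⟩

end Feasible

theorem lim_max_kfeasible_general (β : ℝ) (hβ : 0 < β) (c : ℕ → ℝ) (b : ℕ) (hC : memC β c b) :
    ∀ ε > (0 : ℝ), ∃ K : ℕ, ∀ k : ℕ, K ≤ k →
      (∃ α, memA β b c α ∧ (∀ i, k < i → α i = 0) ∧ kFeasA β k c α) ∧
      supP β b c - ε ≤
        sSup {y | ∃ α, memA β b c α ∧ (∀ i, k < i → α i = 0) ∧ kFeasA β k c α ∧ y = Pfun c α} ∧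
      sSup {y | ∃ α, memA β b c α ∧ (∀ i, k < i → α i = 0) ∧ kFeasA β k c α ∧ y = Pfun c α} ≤
        supP β b c := by
  intro ε hε
  obtain ⟨_, ⟨α, hα, rfl⟩, hnear⟩ : ∃ y ∈ {y | ∃ α, memA β b c α ∧ y = Pfun c α},
      supP β b c - ε < y :=
    exists_lt_of_lt_csSup ⟨_, _, hC.memA_half, rfl⟩ (sub_lt_self _ hε)
  obtain ⟨a, hfeas, hlim⟩ := hα.exists_feasible_tendsto_Pfun hβ hC
  obtain ⟨K, hK⟩ := eventually_atTop.1 (hfeas.and (hlim.eventually_const_lt hnear))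
  refine ⟨K, fun k hk => ?_⟩
  obtain ⟨⟨hA, hzero, hkA⟩, hP⟩ := hK k hk
  have hsub : {y | ∃ α, memA β b c α ∧ (∀ i, k < i → α i = 0) ∧ kFeasA β k c α ∧ y = Pfun c α} ⊆
      {y | ∃ α, memA β b c α ∧ y = Pfun c α} := fun y ⟨x, hx, _, _, hy⟩ => ⟨x, hx, hy⟩
  exact ⟨⟨a k, hA, hzero, hkA⟩,
    hP.le.trans (le_csSup (hC.bddAbove_Pfun.mono hsub) ⟨a k, hA, hzero, hkA, rfl⟩),
    csSup_le_csSup hC.bddAbove_Pfun ⟨_, a k, hA, hzero, hkA, rfl⟩ hsub⟩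

/-- The maximum of `P(c,·)` over `k`-feasible sequences in `A^{≤k}(c,b)` converges to
`sup_{α ∈ A(c,b)} P(c,α)` as `k → ∞`. -/
theorem lim_max_kfeasible (β : ℝ) (hβ : β ∈ Set.Ico (1 : ℝ) 2)
    (c : ℕ → ℝ) (b : ℕ) (hC : memC β c b) :
    ∀ ε > (0 : ℝ), ∃ K : ℕ, ∀ k : ℕ, K ≤ k →
      (∃ α, memA β b c α ∧ (∀ i, k < i → α i = 0) ∧ kFeasA β k c α) ∧
      supP β b c - ε ≤
        sSup {y | ∃ α, memA β b c α ∧ (∀ i, k < i → α i = 0) ∧ kFeasA β k c α ∧ y = Pfun c α} ∧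
      sSup {y | ∃ α, memA β b c α ∧ (∀ i, k < i → α i = 0) ∧ kFeasA β k c α ∧ y = Pfun c α} ≤ supP β b c :=
  lim_max_kfeasible_general β (zero_lt_one.trans_le hβ.1) c b hC
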